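/- Let λ and ρ be real polynomials with λ[0] = 0 and ρ[1] = 1, and suppose λ'[0] · ρ'[1] < 1 (the stability condition λ_2 < 1/ρ'[1]). Then there exists ε > 0 such that for all y with 0 < y < ε, the density evolution update satisfies 1 − ρ[1 − λ[y]] < y; i.e., the fixed point at the origin is stable. -/

import Mathlib

/-!
The update `y ↦ 1 - ρ(1 - λ(y))` vanishes at `0`, because `λ(0) = 0` and `ρ(1) = 1`, and by the
chain rule its derivative there is `λ'(0) ρ'(1) < 1`. Hence its difference quotient at `0`, which
is the ratio of the updated value to `y`, stays below `1` for all small `y > 0`.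
-/

open Polynomial

theorem stability_condition (lam rho : Polynomial ℝ)
    (hlam : lam.eval 0 = 0) (hrho : rho.eval 1 = 1)
    (hstab : (Polynomial.derivative lam).eval 0 * (Polynomial.derivative rho).eval 1 < 1) :
    ∃ ε > 0, ∀ y : ℝ, 0 < y → y < ε → 1 - rho.eval (1 - lam.eval y) < y := by
  have hd : HasDerivAt (fun y : ℝ => 1 - rho.eval (1 - lam.eval y))
      ((derivative lam).eval 0 * (derivative rho).eval 1) 0 := by
    have hin : HasDerivAt (fun y : ℝ => 1 - lam.eval y) (-(derivative lam).eval 0) 0 :=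
      (lam.hasDerivAt 0).const_sub 1
    have hout : HasDerivAt (fun z : ℝ => rho.eval z) ((derivative rho).eval 1)
        (1 - lam.eval 0) := by
      simpa [hlam] using rho.hasDerivAt 1
    have hcomp := (hout.comp (0 : ℝ) hin).const_sub 1
    rwa [mul_neg, neg_neg, mul_comm] at hcomp
  -- Difference quotients are eventually below any bound exceeding the derivative.
  have hev := (hd.hasDerivWithinAt (s := Set.Ioi 0)).limsup_slope_le' (by simp) hstab
  obtain ⟨ε, hε, hsub⟩ := mem_nhdsGT_iff_exists_Ioo_subset.1 hev
  refine ⟨ε, hε, fun y hy hyε => ?_⟩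
  have h : slope (fun y : ℝ => 1 - rho.eval (1 - lam.eval y)) 0 y < 1 := hsub ⟨hy, hyε⟩
  simpa [slope_def_field, hlam, hrho, div_lt_one hy] using h
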